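/- Let Ω ⊆ ℝⁿ be an open domain, let M, P, Q satisfy conditions (M) and (Y), let μ satisfy condition (μ), and assume the Hardy-type inequality (H): there are constants K, A > 0 such that ∫_Ω P(|∇φ|·|u|) dμ ≤ K·∫_Ω P(A·|∇u|) dμ for every u ∈ C₀^∞(Ω). If in addition P or Q satisfies the Δ₂-condition, then there exist constants L₁, L₂ > 0, independent of u, such that for every u ∈ C₀^∞(Ω): ∫_Ω M(|∇u|) dμ ≤ L₁·∫_Ω P(|∇⁽²⁾u|) dμ + L₂·∫_Ω Q(|u|) dμ. -/

import Mathlib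

open MeasureTheory Filter Set

noncomputable section

/-- `E n` is the Euclidean space `ℝⁿ`. -/
abbrev E (n : ℕ) := EuclideanSpace ℝ (Fin n)

/-- An `N`-function: a continuous convex function `M : [0,∞) → [0,∞)` with `M(0) = 0`,
`lim_{λ→0} M(λ)/λ = 0` and `lim_{λ→∞} λ/M(λ) = 0`. -/
def IsNFunction (M : ℝ → ℝ) : Prop :=
  ContinuousOn M (Ici 0) ∧ ConvexOn ℝ (Ici 0) M ∧ M 0 = 0 ∧
  (∀ x ≥ (0:ℝ), 0 ≤ M x) ∧
  Tendsto (fun l => M l / l) (nhdsWithin 0 (Ioi 0)) (nhds 0) ∧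
  Tendsto (fun l => l / M l) atTop (nhds 0)

/-- The Δ₂-condition. -/
def Delta2 (M : ℝ → ℝ) : Prop := ∃ c > 0, ∀ l > (0:ℝ), M (2 * l) ≤ c * M l

/-- Condition (M): `M` is an `N`-function of class `C¹` on `(0,∞)` satisfying the
Δ₂-condition and such that `M'(λ)/λ` is bounded near zero. -/
def CondM (M : ℝ → ℝ) : Prop :=
  IsNFunction M ∧ ContDiffOn ℝ 1 M (Ioi 0) ∧ Delta2 M ∧
  ∃ ε > (0:ℝ), ∃ C : ℝ, ∀ l ∈ Ioo (0:ℝ) ε, deriv M l / l ≤ C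

/-- Condition (Y): `P, Q` are nonnegative nondecreasing measurable functions vanishing at `0`
such that the Young-type inequality `(M(u)/u²)·v·w ≤ M(u) + P(v) + Q(w)` holds. -/
def CondY (M P Q : ℝ → ℝ) : Prop :=
  Measurable P ∧ Measurable Q ∧ (∀ x ≥ (0:ℝ), 0 ≤ P x) ∧ (∀ x ≥ (0:ℝ), 0 ≤ Q x) ∧
  MonotoneOn P (Ici 0) ∧ MonotoneOn Q (Ici 0) ∧ P 0 = 0 ∧ Q 0 = 0 ∧
  ∀ u > (0:ℝ), ∀ v > (0:ℝ), ∀ w > (0:ℝ), M u / u ^ 2 * v * w ≤ M u + P v + Q w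

/-- `φ` is locally Lipschitz on `Ω`. -/
def LocLipschitzOn {α : Type*} [MetricSpace α] (Ω : Set α) (φ : α → ℝ) : Prop :=
  ∀ x ∈ Ω, ∃ s ∈ nhdsWithin x Ω, ∃ K : NNReal, LipschitzOnWith K φ s

/-- The measure `μ(dx) = e^{-φ(x)} dx` on the domain `Ω`. -/
def measOf {n : ℕ} (Ω : Set (E n)) (φ : E n → ℝ) : Measure (E n) :=
  (volume.restrict Ω).withDensity fun x => ENNReal.ofReal (Real.exp (-φ x))

/-- `u ∈ C₀^∞(Ω)`: smooth and compactly supported inside `Ω`. -/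
def TestFun {n : ℕ} (Ω : Set (E n)) (u : E n → ℝ) : Prop :=
  ContDiff ℝ (⊤ : ℕ∞) u ∧ HasCompactSupport u ∧ tsupport u ⊆ Ω

/-- The Hilbert–Schmidt norm of the Hessian of `u` at `x`. -/
def hessNormHS {n : ℕ} (u : E n → ℝ) (x : E n) : ℝ :=
  Real.sqrt (∑ i : Fin n, ∑ j : Fin n,
    (iteratedFDeriv ℝ 2 u x ![EuclideanSpace.single i (1:ℝ), EuclideanSpace.single j (1:ℝ)]) ^ 2)

/-- The Luxemburg norm `‖f‖_{L^R(μ)} = inf {K > 0 : ∫ R(|f|/K) dμ ≤ 1}`. -/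
def luxNorm {α : Type*} [MeasurableSpace α] (R : ℝ → ℝ) (μ : Measure α) (f : α → ℝ) : ℝ :=
  sInf {K : ℝ | 0 < K ∧ ∫ x, R (|f x| / K) ∂μ ≤ 1}

/-!
The inequality is an integration by parts combined with a Young-type absorption. Write
`|∇u|² · M(|∇u|)/|∇u|² = M(|∇u|)` and move one gradient: the field `u · (M(|∇u|)/|∇u|²) ∇u`
vanishes near the boundary, so integrating its divergence against `e^{-φ}` expresses
`∫ M(|∇u|) dμ` as the integral of `M(|∇u|)/|∇u|² · ∇u · ∇φ · u` minus that of
`u · div (M(|∇u|)/|∇u|² ∇u)`.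

* To make the field `C¹`, `|∇u|` is replaced in the weight by `r = (|∇u|² + δ)^{1/2}`, and
  `δ → 0` at the end by dominated convergence (`scaled_estimate`). The density is only locally
  Lipschitz on `Ω`; `integral_fderiv_measOf` handles this through a Lipschitz extension.
* Convexity and the Δ₂-condition of `M` give `r |M'(r)| ≤ c M(r)`, hence the divergence of
  `M(r)/r² ∇u` is at most `C · M(r)/r² · |∇²u|` with `C` independent of `δ` (`CondM.div_bound`).
* Both terms now have the form `M(r)/r² · v · |u|` with `v = C |∇²u| + |∇φ| ∑ᵢ |∂ᵢu|`. The Young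
  inequality applied to `τ v` and `(2/τ) |u|` bounds this by
  `½ (M(r) + P(τ v) + Q((2/τ) |u|))`, for any scale `τ > 0` (`CondY.young`).
* Monotonicity splits `P(τ v)` into a Hessian part and parts `P(|∇φ| · |a ∂ᵢu|)`; the Hardy
  inequality, applied to the test functions `a ∂ᵢu`, turns the latter into Hessian terms
  (`hardy_sum`). After `δ → 0` half of `∫ M(|∇u|) dμ`, which is finite, is absorbed on the left.

What remains is `∫ M(|∇u|) ≤ (1 + nK) ∫ P(τ B |∇²u|) + ∫ Q((2/τ) |u|)` with `B` independent of `τ`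
(`scaled_estimate'`). If `P` satisfies the Δ₂-condition, `τ = 2` leaves `Q` with its bare argument
and Δ₂ removes `2B` from `P`; if `Q` does, `τ = 1/B` does the converse.
-/

/-! ### Scalar inequalities for `M`, `P` and `Q` -/

/-- The Δ₂-condition, iterated: a nondecreasing Δ₂-function absorbs any dilation. -/
lemma Delta2.dilate {P : ℝ → ℝ} (h : Delta2 P) (hmono : MonotoneOn P (Ici 0))
    (h0 : P 0 = 0) (B : ℝ) (hB : 0 ≤ B) :
    ∃ c > (0:ℝ), ∀ t ≥ (0:ℝ), P (B * t) ≤ c * P t := by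
  obtain ⟨c, hc, h⟩ := h
  have key : ∀ k : ℕ, ∀ t ≥ (0:ℝ), P (2 ^ k * t) ≤ c ^ k * P t := by
    intro k
    induction k with
    | zero => intro t _; simp
    | succ k ih =>
      intro t ht
      rcases ht.eq_or_lt with rfl | ht
      · simp [h0]
      · have h1 := h (2 ^ k * t) (by positivity)
        have h2 := mul_le_mul_of_nonneg_left (ih t ht.le) hc.le
        calc P (2 ^ (k + 1) * t) = P (2 * (2 ^ k * t)) := by ring_nf
          _ ≤ c * (c ^ k * P t) := h1.trans h2
          _ = c ^ (k + 1) * P t := by ring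
  obtain ⟨k, hk⟩ := pow_unbounded_of_one_lt B (one_lt_two : (1:ℝ) < 2)
  refine ⟨c ^ k, by positivity, fun t ht => le_trans (hmono ?_ ?_ ?_) (key k t ht)⟩
  · exact mul_nonneg hB ht
  · exact mul_nonneg (by positivity) ht
  · exact mul_le_mul_of_nonneg_right hk.le ht

/-- A nondecreasing function of a sum of `n` terms is controlled by its values at `n` times the
individual terms, since the sum is at most `n` times its largest term. -/
lemma monotone_sum_le {P : ℝ → ℝ} (hmono : MonotoneOn P (Ici 0)) (hnn : ∀ x ≥ (0:ℝ), 0 ≤ P x)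
    (h0 : P 0 = 0) {n : ℕ} (a : Fin n → ℝ) (ha : ∀ i, 0 ≤ a i) :
    P (∑ i, a i) ≤ ∑ i, P (n * a i) := by
  rcases Nat.eq_zero_or_pos n with rfl | hn
  · simp [h0]
  · have : Nonempty (Fin n) := ⟨⟨0, hn⟩⟩
    obtain ⟨i, -, hi⟩ := Finset.exists_max_image Finset.univ a Finset.univ_nonempty
    have h1 : ∑ j, a j ≤ n * a i := by
      have := Finset.sum_le_card_nsmul Finset.univ a (a i) hi
      simpa using this
    calc P (∑ j, a j) ≤ P (n * a i) :=
          hmono (Finset.sum_nonneg fun j _ => ha j) (mul_nonneg n.cast_nonneg (ha i)) h1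
      _ ≤ ∑ j, P (n * a j) :=
          Finset.single_le_sum (f := fun j => P (n * a j))
            (fun j _ => hnn _ (mul_nonneg n.cast_nonneg (ha j))) (Finset.mem_univ i)

lemma monotone_add_le {P : ℝ → ℝ} (hmono : MonotoneOn P (Ici 0)) (hnn : ∀ x ≥ (0:ℝ), 0 ≤ P x)
    (a b : ℝ) (ha : 0 ≤ a) (hb : 0 ≤ b) : P (a + b) ≤ P (2 * a) + P (2 * b) := by
  rcases le_total a b with h | h
  · have h1 : P (a + b) ≤ P (2 * b) := hmono (add_nonneg ha hb) (by simpa using hb) (by linarith)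
    have h2 := hnn (2 * a) (by linarith)
    linarith
  · have h1 : P (a + b) ≤ P (2 * a) := hmono (add_nonneg ha hb) (by simpa using ha) (by linarith)
    have h2 := hnn (2 * b) (by linarith)
    linarith

/-- The Young-type inequality with coefficient `1/2` in front of `M` and a free dilation `τ`,
which is inserted as `v w = (τ v) (2 w / τ) / 2`. -/
lemma CondY.young {M P Q : ℝ → ℝ} (hY : CondY M P Q) (hM0 : ∀ x ≥ (0:ℝ), 0 ≤ M x)
    {τ : ℝ} (hτ : 0 < τ) {r v w : ℝ} (hr : 0 < r) (hv : 0 ≤ v) (hw : 0 ≤ w) :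
    M r / r ^ 2 * v * w ≤ 1 / 2 * (M r + P (τ * v) + Q (2 / τ * w)) := by
  obtain ⟨-, -, hP, hQ, -, -, -, -, hY⟩ := hY
  have h1 := hM0 r hr.le
  have h2 := hP (τ * v) (by positivity)
  have h3 := hQ (2 / τ * w) (by positivity)
  rcases hv.eq_or_lt with rfl | hv
  · simp only [mul_zero, zero_mul] at *; linarith
  rcases hw.eq_or_lt with rfl | hw
  · simp only [mul_zero] at *; linarith
  have h := hY r hr (τ * v) (by positivity) (2 / τ * w) (by positivity)
  have h4 : M r / r ^ 2 * (τ * v) * (2 / τ * w) = 2 * (M r / r ^ 2 * v * w) := by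
    field_simp
  linarith

lemma CondM.differentiableAt {M : ℝ → ℝ} (hM : CondM M) {r : ℝ} (hr : 0 < r) :
    DifferentiableAt ℝ M r :=
  (hM.2.1.contDiffAt (Ioi_mem_nhds hr)).differentiableAt one_ne_zero

/-- A convex Δ₂-function satisfies `r |M'(r)| ≤ c M(r)`: the tangent at `r` lies below the chord
over `[r, 2r]`, and `M(2r) ≤ c M(r)`. -/
lemma CondM.deriv_bound {M : ℝ → ℝ} (hM : CondM M) :
    ∃ c ≥ (0:ℝ), ∀ r > (0:ℝ), |deriv M r| * r ≤ c * M r := by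
  obtain ⟨c, hc, hΔ⟩ := hM.2.2.1
  refine ⟨c, hc.le, fun r hr => ?_⟩
  have hcv := hM.1.2.1
  have hM0 := hM.1.2.2.1
  have hnn := hM.1.2.2.2.1
  have hd := hM.differentiableAt hr
  have h1 := hcv.deriv_le_slope (x := r) (y := 2 * r) hr.le (by simpa using hr.le)
    (by linarith) hd
  have h2 := hcv.slope_le_deriv (x := 0) (y := r) (by simp) hr.le hr hd
  rw [slope_def_field, le_div_iff₀ (by linarith)] at h1
  rw [slope_def_field, hM0, sub_zero, sub_zero] at h2
  have h3 : 0 ≤ deriv M r := (div_nonneg (hnn r hr.le) hr.le).trans h2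
  rw [abs_of_nonneg h3]
  have h4 := hΔ r hr
  have h5 := hnn r hr.le
  nlinarith

/-! ### The measure `e^{-φ} dx` -/

lemma LocLipschitzOn.locallyLipschitzOn {n : ℕ} {Ω : Set (E n)} {φ : E n → ℝ}
    (h : LocLipschitzOn Ω φ) : LocallyLipschitzOn Ω φ := fun x hx => by
  obtain ⟨s, hs, K, hK⟩ := h x hx
  exact ⟨K, s, hs, hK⟩

lemma LocLipschitzOn.exists_lip {n : ℕ} {Ω S : Set (E n)} {φ : E n → ℝ}
    (h : LocLipschitzOn Ω φ) (hS : IsCompact S) (hSΩ : S ⊆ Ω) : ∃ K, LipschitzOnWith K φ S :=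
  LocallyLipschitzOn.exists_lipschitzOnWith_of_compact hS (h.locallyLipschitzOn.mono hSΩ)

lemma measOf_absCont {n : ℕ} (Ω : Set (E n)) (φ : E n → ℝ) :
    measOf Ω φ ≪ volume.restrict Ω := withDensity_absolutelyContinuous _ _

lemma density_aemeasurable {n : ℕ} {Ω : Set (E n)} (hΩ : IsOpen Ω) {φ : E n → ℝ}
    (hφ : LocLipschitzOn Ω φ) :
    AEMeasurable (fun x => ENNReal.ofReal (Real.exp (-φ x))) (volume.restrict Ω) := by
  have : AEMeasurable φ (volume.restrict Ω) :=
    hφ.locallyLipschitzOn.continuousOn.aemeasurable hΩ.measurableSet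
  fun_prop

lemma measOf_compact_lt_top {n : ℕ} {Ω S : Set (E n)} {φ : E n → ℝ}
    (hφ : LocLipschitzOn Ω φ) (hS : IsCompact S) (hSΩ : S ⊆ Ω) : measOf Ω φ S < ⊤ := by
  have hc : ContinuousOn (fun x => Real.exp (-φ x)) S :=
    (Real.continuous_exp.comp_continuousOn (hφ.locallyLipschitzOn.continuousOn.mono hSΩ).neg)
  obtain ⟨C, hC⟩ := hS.exists_bound_of_continuousOn hc
  rw [measOf, withDensity_apply _ hS.measurableSet,
    Measure.restrict_restrict hS.measurableSet, inter_eq_left.2 hSΩ]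
  calc ∫⁻ x in S, ENNReal.ofReal (Real.exp (-φ x))
      ≤ ∫⁻ _ in S, ENNReal.ofReal C := by
        refine setLIntegral_mono' hS.measurableSet fun x hx => ENNReal.ofReal_le_ofReal ?_
        exact (le_abs_self _).trans (hC x hx)
    _ = ENNReal.ofReal C * volume S := by simp
    _ < ⊤ := ENNReal.mul_lt_top ENNReal.ofReal_lt_top hS.measure_lt_top

lemma integrable_of_bdd {n : ℕ} {Ω S : Set (E n)} {φ : E n → ℝ}
    (hφ : LocLipschitzOn Ω φ) (hS : IsCompact S) (hSΩ : S ⊆ Ω) {f : E n → ℝ}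
    (hm : AEStronglyMeasurable f (measOf Ω φ)) (hf0 : ∀ x ∉ S, f x = 0) {C : ℝ}
    (hC : ∀ᵐ x ∂(measOf Ω φ), |f x| ≤ C) : Integrable f (measOf Ω φ) := by
  refine (integrableOn_iff_integrable_of_support_subset (s := S) ?_).1 ?_
  · intro x hx
    by_contra h
    exact hx (hf0 x h)
  · exact Measure.integrableOn_of_bounded (measOf_compact_lt_top hφ hS hSΩ).ne hm
      (ae_restrict_of_ae hC)

/-- An integral against `e^{-φ} dx` on `Ω` is a Lebesgue integral over the whole space when the
integrand vanishes off `Ω`. -/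
lemma integral_measOf {n : ℕ} {Ω : Set (E n)} (hΩ : IsOpen Ω) {φ : E n → ℝ}
    (hφ : LocLipschitzOn Ω φ) {f : E n → ℝ} (hf0 : ∀ x ∉ Ω, f x = 0) :
    ∫ x, f x ∂(measOf Ω φ) = ∫ x, f x * Real.exp (-φ x) := by
  rw [measOf, integral_withDensity_eq_integral_toReal_smul₀ (density_aemeasurable hΩ hφ)
    (Eventually.of_forall fun x => ENNReal.ofReal_lt_top)]
  rw [← setIntegral_eq_integral_of_forall_compl_eq_zero (s := Ω)
    (f := fun x => f x * Real.exp (-φ x)) fun x hx => by simp [hf0 x hx]]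
  congr 1
  ext x
  simp only [ENNReal.toReal_ofReal (Real.exp_pos _).le, smul_eq_mul, mul_comm]

lemma gradient_aemeasurable {n : ℕ} {Ω : Set (E n)} {φ : E n → ℝ} {φ' : E n → E n}
    (hφ' : ∀ᵐ x ∂(volume.restrict Ω), HasGradientAt φ (φ' x) x) :
    AEMeasurable φ' (measOf Ω φ) := by
  have h1 : Measurable (gradient φ) := by
    exact (InnerProductSpace.toDual ℝ (E n)).symm.continuous.measurable.comp
      (measurable_fderiv ℝ φ)
  refine ⟨gradient φ, h1, (measOf_absCont Ω φ).ae_le ?_⟩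
  filter_upwards [hφ'] with x hx using hx.gradient.symm

/-- Restricting to the interior of `S` makes a Lipschitz bound of `φ` on `S` bound `∇φ`. -/
lemma gradient_bound {n : ℕ} {Ω S : Set (E n)} {φ : E n → ℝ} {φ' : E n → E n}
    (hφ : LocLipschitzOn Ω φ) (hS : IsCompact S) (hSΩ : S ⊆ Ω)
    (hφ' : ∀ᵐ x ∂(volume.restrict Ω), HasGradientAt φ (φ' x) x) :
    ∃ L ≥ (0:ℝ), ∀ᵐ x ∂(measOf Ω φ), x ∈ interior S → ‖φ' x‖ ≤ L := by
  obtain ⟨L, hL⟩ := hφ.exists_lip hS hSΩ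
  refine ⟨L, L.2, (measOf_absCont Ω φ).ae_le ?_⟩
  filter_upwards [hφ'] with x hx hxS
  have := (hasGradientAt_iff_hasFDerivAt.1 hx).le_of_lipschitzOn
    (mem_interior_iff_mem_nhds.1 hxS) hL
  simpa using this

/-- Integration by parts against `e^{-φ} dx`. The weight `e^{-φ}` is only locally Lipschitz on
`Ω`, so it is replaced off the support of `w` by a globally Lipschitz function, to which
Rademacher-type integration by parts applies. -/
lemma integral_fderiv_measOf {n : ℕ} {Ω : Set (E n)} (hΩ : IsOpen Ω) {φ : E n → ℝ}
    (hφ : LocLipschitzOn Ω φ) {φ' : E n → E n}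
    (hφ' : ∀ᵐ x ∂(volume.restrict Ω), HasGradientAt φ (φ' x) x)
    {w : E n → ℝ} (hw : ContDiff ℝ 1 w) (hwc : HasCompactSupport w) (hwΩ : tsupport w ⊆ Ω)
    (v : E n) :
    ∫ x, fderiv ℝ w x v ∂(measOf Ω φ) = ∫ x, w x * inner ℝ (φ' x) v ∂(measOf Ω φ) := by
  have hK : IsCompact (tsupport w) := hwc
  obtain ⟨L, hL⟩ := hφ.exists_lip hK hwΩ
  obtain ⟨C, hC⟩ := hK.exists_bound_of_continuousOn hL.continuousOn
  obtain ⟨D, hD⟩ := (Real.contDiff_exp (n := 1)).contDiffOn.exists_lipschitzOnWith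
    one_ne_zero (convex_Icc (-C) C) isCompact_Icc
  have hneg : LipschitzOnWith L (fun x => -φ x) (tsupport w) := hL.neg
  have hlip : LipschitzOnWith (D * L) (fun x => Real.exp (-φ x)) (tsupport w) := by
    refine hD.comp hneg fun x hx => ?_
    have := abs_le.1 (hC x hx)
    exact ⟨by linarith, by linarith⟩
  obtain ⟨g, hg, hgeq⟩ := hlip.extend_real
  obtain ⟨D', hw'⟩ := ContDiff.lipschitzWith_of_hasCompactSupport hwc hw one_ne_zero
  have key := LipschitzWith.integral_lineDeriv_mul_eq (μ := volume) hg hw' hwc v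
  have hz : ∀ x ∉ tsupport w, w x = 0 := fun x hx => image_eq_zero_of_notMem_tsupport hx
  have hz' : ∀ x ∉ tsupport w, fderiv ℝ w x v = 0 := fun x hx => by
    rw [fderiv_of_notMem_tsupport (𝕜 := ℝ) hx]; rfl
  rw [integral_measOf hΩ hφ fun x hx => hz' x fun h => hx (hwΩ h),
    integral_measOf hΩ hφ fun x hx => by rw [hz x fun h => hx (hwΩ h), zero_mul]]
  have e1 : ∫ x, fderiv ℝ w x v * Real.exp (-φ x) = - ∫ x, lineDeriv ℝ w x (-v) * g x := by
    rw [← integral_neg]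
    congr 1
    ext x
    rw [(hw.differentiable one_ne_zero).differentiableAt.lineDeriv_eq_fderiv, map_neg]
    by_cases hx : x ∈ tsupport w
    · rw [← hgeq hx]; ring
    · rw [hz' x hx]; ring
  have e2 : ∫ x, w x * inner ℝ (φ' x) v * Real.exp (-φ x) = - ∫ x, lineDeriv ℝ g x v * w x := by
    rw [← integral_neg]
    refine integral_congr_ae ?_
    filter_upwards [(ae_restrict_iff' hΩ.measurableSet).1 hφ'] with x hx
    by_cases hwx : w x = 0
    · simp [hwx]
    · have hxK : tsupport w ∈ nhds x :=
        mem_of_superset (hw.continuous.isOpen_support.mem_nhds hwx) (subset_tsupport w)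
      have hd := (hx (hwΩ (mem_of_mem_nhds hxK))).hasFDerivAt
      have hd2 : HasFDerivAt g _ x := (hd.neg.exp).congr_of_eventuallyEq
        (by filter_upwards [hxK] with y hy using (hgeq hy).symm)
      rw [hd2.differentiableAt.lineDeriv_eq_fderiv, hd2.fderiv]
      simp
      ring
  rw [e1, e2, key]

/-! ### Partial derivatives and the Hessian norm -/

/-- The `i`-th partial derivative of `u`. -/
def pd {n : ℕ} (u : E n → ℝ) (i : Fin n) (x : E n) : ℝ :=
  fderiv ℝ u x (EuclideanSpace.single i 1)

lemma TestFun.pderiv {n : ℕ} {Ω : Set (E n)} {u : E n → ℝ} (hu : TestFun Ω u) (i : Fin n) :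
    TestFun Ω (pd u i) := by
  refine ⟨?_, hu.2.1.fderiv_apply ℝ _, (tsupport_fderiv_apply_subset ℝ _).trans hu.2.2⟩
  exact (hu.1.fderiv_right (m := (⊤ : ℕ∞)) (by simp)).clm_apply contDiff_const

lemma TestFun.const_mul {n : ℕ} {Ω : Set (E n)} {u : E n → ℝ} (hu : TestFun Ω u) (c : ℝ) :
    TestFun Ω (fun x => c * u x) :=
  ⟨contDiff_const.mul hu.1, hu.2.1.mul_left, (tsupport_mul_subset_right).trans hu.2.2⟩

lemma inner_single_eq {n : ℕ} (y : E n) (i : Fin n) :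
    inner ℝ y (EuclideanSpace.single i (1:ℝ)) = y i := by
  simp [EuclideanSpace.inner_single_right]

lemma gradient_apply {n : ℕ} (u : E n → ℝ) (x : E n) (i : Fin n) :
    gradient u x i = pd u i x := by
  rw [← inner_single_eq, pd, ← toDual_gradient, InnerProductSpace.toDual_apply_apply]

lemma sum_sq_pd {n : ℕ} (u : E n → ℝ) (x : E n) :
    ∑ i, pd u i x ^ 2 = ‖gradient u x‖ ^ 2 := by
  rw [EuclideanSpace.norm_sq_eq]
  simp [gradient_apply]

lemma abs_pd_le {n : ℕ} (u : E n → ℝ) (x : E n) (i : Fin n) :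
    |pd u i x| ≤ ‖gradient u x‖ := by
  rw [← gradient_apply]
  exact PiLp.norm_apply_le (gradient u x) i

lemma pd_pd {n : ℕ} {Ω : Set (E n)} {u : E n → ℝ} (hu : TestFun Ω u) (i j : Fin n) (x : E n) :
    pd (pd u j) i x = iteratedFDeriv ℝ 2 u x
      ![EuclideanSpace.single i (1:ℝ), EuclideanSpace.single j (1:ℝ)] := by
  have h1 : ContDiff ℝ (⊤ : ℕ∞) (fderiv ℝ u) := hu.1.fderiv_right (by simp)
  have h2 := (h1.differentiable (by simp)).differentiableAt (x := x)
  rw [iteratedFDeriv_two_apply]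
  unfold pd
  rw [fderiv_clm_apply h2 (differentiableAt_const _)]
  simp

lemma hess_sq {n : ℕ} {Ω : Set (E n)} {u : E n → ℝ} (hu : TestFun Ω u) (x : E n) :
    hessNormHS u x = Real.sqrt (∑ i, ∑ j, pd (pd u j) i x ^ 2) := by
  simp only [hessNormHS, pd_pd hu]

lemma hess_nonneg {n : ℕ} (u : E n → ℝ) (x : E n) : 0 ≤ hessNormHS u x := Real.sqrt_nonneg _

lemma abs_pd_pd_le {n : ℕ} {Ω : Set (E n)} {u : E n → ℝ} (hu : TestFun Ω u) (i j : Fin n)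
    (x : E n) : |pd (pd u j) i x| ≤ hessNormHS u x := by
  rw [hess_sq hu, ← Real.sqrt_sq_eq_abs]
  refine Real.sqrt_le_sqrt ?_
  exact (Finset.single_le_sum (f := fun j => pd (pd u j) i x ^ 2)
    (fun _ _ => sq_nonneg _) (Finset.mem_univ j)).trans
    (Finset.single_le_sum (f := fun i => ∑ j, pd (pd u j) i x ^ 2)
      (fun _ _ => Finset.sum_nonneg fun _ _ => sq_nonneg _) (Finset.mem_univ i))

lemma norm_gradient_pd_le {n : ℕ} {Ω : Set (E n)} {u : E n → ℝ} (hu : TestFun Ω u) (j : Fin n)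
    (x : E n) : ‖gradient (pd u j) x‖ ≤ hessNormHS u x := by
  rw [hess_sq hu, ← Real.sqrt_sq (norm_nonneg (gradient (pd u j) x)), ← sum_sq_pd]
  refine Real.sqrt_le_sqrt (Finset.sum_le_sum fun i _ => ?_)
  exact Finset.single_le_sum (f := fun j => pd (pd u j) i x ^ 2)
    (fun _ _ => sq_nonneg _) (Finset.mem_univ j)

lemma gradient_const_mul {n : ℕ} {Ω : Set (E n)} {u : E n → ℝ} (hu : TestFun Ω u) (c : ℝ)
    (x : E n) : ‖gradient (fun y => c * u y) x‖ = |c| * ‖gradient u x‖ := by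
  have hd := (hu.1.differentiable (by simp)).differentiableAt (x := x)
  have : gradient (fun y => c * u y) x = c • gradient u x := by
    ext i
    rw [gradient_apply, PiLp.smul_apply, gradient_apply, pd, fderiv_const_mul hd]
    rfl
  rw [this, norm_smul, Real.norm_eq_abs]

lemma TestFun.continuous_gradient {n : ℕ} {Ω : Set (E n)} {u : E n → ℝ} (hu : TestFun Ω u) :
    Continuous (gradient u) :=
  (InnerProductSpace.toDual ℝ (E n)).symm.continuous.comp (hu.1.continuous_fderiv (by simp))

lemma TestFun.continuous_hess {n : ℕ} {Ω : Set (E n)} {u : E n → ℝ} (hu : TestFun Ω u) :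
    Continuous (hessNormHS u) := by
  have : hessNormHS u = fun x => Real.sqrt (∑ i, ∑ j, pd (pd u j) i x ^ 2) :=
    funext fun x => hess_sq hu x
  rw [this]
  exact Real.continuous_sqrt.comp (continuous_finsetSum _ fun i _ => continuous_finsetSum _
    fun j _ => (((hu.pderiv j).pderiv i).1.continuous).pow 2)

lemma pd_eq_zero {n : ℕ} {u : E n → ℝ} {x : E n} (hx : x ∉ tsupport u) (i : Fin n) :
    pd u i x = 0 := by
  rw [pd, fderiv_of_notMem_tsupport (𝕜 := ℝ) hx]; rfl

lemma pd_tsupport {n : ℕ} (u : E n → ℝ) (i : Fin n) : tsupport (pd u i) ⊆ tsupport u :=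
  tsupport_fderiv_apply_subset ℝ _

lemma gradient_eq_zero {n : ℕ} {u : E n → ℝ} {x : E n} (hx : x ∉ tsupport u) :
    gradient u x = 0 := by
  ext i
  rw [gradient_apply, pd_eq_zero hx]; rfl

lemma hess_eq_zero {n : ℕ} {Ω : Set (E n)} {u : E n → ℝ} (hu : TestFun Ω u) {x : E n}
    (hx : x ∉ tsupport u) : hessNormHS u x = 0 := by
  rw [hess_sq hu]
  simp [fun i j => pd_eq_zero (u := pd u j) (fun h => hx (pd_tsupport u j h)) i]

/-! ### The regularised weight `M(r)/r²`, `r = (|∇u|² + δ)^{1/2}` -/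

/-- The function `s ↦ M(√s)/s`, i.e. `M(r)/r²` in the variable `s = r²`. It is `C¹` for `s > 0`. -/
def psi (M : ℝ → ℝ) (s : ℝ) : ℝ := M (Real.sqrt s) / s

lemma CondM.contDiffAt_psi {M : ℝ → ℝ} (hM : CondM M) {s : ℝ} (hs : 0 < s) :
    ContDiffAt ℝ 1 (psi M) s := by
  have h1 : ContDiffAt ℝ 1 M (Real.sqrt s) := hM.2.1.contDiffAt (Ioi_mem_nhds (Real.sqrt_pos.2 hs))
  exact (h1.comp s (Real.contDiffAt_sqrt hs.ne')).div contDiffAt_id hs.ne'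

/-- `s |ψ'(s)|` is controlled by `ψ(s)`, because `r M'(r) ≤ c M(r)`. -/
lemma CondM.deriv_psi_le {M : ℝ → ℝ} (hM : CondM M) :
    ∃ c ≥ (0:ℝ), ∀ s > (0:ℝ), |deriv (psi M) s| * s ≤ c * psi M s := by
  obtain ⟨c, hc, h⟩ := hM.deriv_bound
  refine ⟨c + 1, by linarith, fun s hs => ?_⟩
  set r := Real.sqrt s with hr
  have hr0 : 0 < r := Real.sqrt_pos.2 hs
  have hrs : r ^ 2 = s := Real.sq_sqrt hs.le
  have hMr : 0 ≤ M r := hM.1.2.2.2.1 r hr0.le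
  have h1 : HasDerivAt (fun s => M (Real.sqrt s)) (deriv M r * (1 / (2 * r))) s :=
    (hM.differentiableAt hr0).hasDerivAt.comp s (Real.hasDerivAt_sqrt hs.ne')
  have h2 : HasDerivAt (psi M) _ s := h1.div (hasDerivAt_id s) hs.ne'
  rw [h2.deriv]
  have hpsi : psi M s = M r / s := rfl
  have e : (deriv M r * (1 / (2 * r)) * s - M r * 1) / s ^ 2 * s
      = (deriv M r * r / 2 - M r) / s := by
    rw [← hrs]
    field_simp
  have e' : |(deriv M r * (1 / (2 * r)) * s - M r * 1) / s ^ 2| * s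
      = |deriv M r * r / 2 - M r| / s := by
    rw [← abs_of_pos hs, ← abs_mul, abs_of_pos hs, e, abs_div, abs_of_pos hs]
  rw [e', hpsi, ← mul_div_assoc]
  refine div_le_div_of_nonneg_right ?_ hs.le
  have h3 := h r hr0
  have h4 : |deriv M r * r / 2 - M r| ≤ |deriv M r| * r / 2 + M r := by
    refine (abs_sub _ _).trans ?_
    rw [abs_div, abs_mul, abs_of_pos hr0, abs_of_nonneg hMr]
    simp
  have h5 : 0 ≤ |deriv M r| * r := by positivity
  linarith

/-- The weight `M(r)/r²` with `r² = |∇u|² + δ`. -/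
def wt {n : ℕ} (M : ℝ → ℝ) (u : E n → ℝ) (δ : ℝ) (x : E n) : ℝ :=
  psi M (∑ j, pd u j x ^ 2 + δ)

section
variable {n : ℕ} {Ω : Set (E n)} {u : E n → ℝ}

lemma sum_sq_pos (u : E n → ℝ) {δ : ℝ} (hδ : 0 < δ) (x : E n) : 0 < ∑ j, pd u j x ^ 2 + δ :=
  add_pos_of_nonneg_of_pos (Finset.sum_nonneg fun _ _ => sq_nonneg _) hδ

lemma contDiff_wt {M : ℝ → ℝ} (hM : CondM M) (hu : TestFun Ω u) {δ : ℝ} (hδ : 0 < δ) :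
    ContDiff ℝ 1 (wt M u δ) := by
  rw [contDiff_iff_contDiffAt]
  intro x
  have : ContDiff ℝ 1 fun x => ∑ j, pd u j x ^ 2 + δ :=
    (ContDiff.sum fun j _ => ((hu.pderiv j).1.of_le (by simp)).pow 2).add contDiff_const
  exact (hM.contDiffAt_psi (sum_sq_pos u hδ x)).comp x this.contDiffAt

lemma pd_wt {M : ℝ → ℝ} (hM : CondM M) (hu : TestFun Ω u) {δ : ℝ} (hδ : 0 < δ) (i : Fin n)
    (x : E n) : pd (wt M u δ) i x = deriv (psi M) (∑ j, pd u j x ^ 2 + δ) *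
      ∑ j, 2 * pd u j x * pd (pd u j) i x := by
  have h1 : HasFDerivAt (fun x => ∑ j, pd u j x ^ 2 + δ)
      (∑ j, (2 * pd u j x) • fderiv ℝ (pd u j) x) x := by
    refine HasFDerivAt.add_const _ (HasFDerivAt.fun_sum fun j _ => ?_)
    have := (((hu.pderiv j).1.differentiable (by simp)).differentiableAt (x := x)).hasFDerivAt.pow 2
    simpa using this
  have h2 := ((hM.contDiffAt_psi (sum_sq_pos u hδ x)).differentiableAt one_ne_zero).hasDerivAt
  have h3 : HasFDerivAt (wt M u δ) _ x := h2.comp_hasFDerivAt x h1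
  rw [pd, h3.fderiv]
  simp [pd]

/-- The divergence of `M(r)/r² ∇u`, expanded by the product rule, is bounded by a multiple of
`M(r)/r² |∇²u|`, uniformly in the regularisation parameter. -/
lemma CondM.div_bound {M : ℝ → ℝ} (hM : CondM M) (n : ℕ) : ∃ C > (0:ℝ),
    ∀ (Ω : Set (E n)) (u : E n → ℝ), TestFun Ω u → ∀ δ > (0:ℝ), ∀ x,
      |∑ i, (pd (wt M u δ) i x * pd u i x + wt M u δ x * pd (pd u i) i x)| ≤
        C * wt M u δ x * hessNormHS u x := by
  obtain ⟨c, hc, hψ⟩ := hM.deriv_psi_le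
  refine ⟨2 * n ^ 2 * c + n + 1, by positivity, fun Ω u hu δ hδ x => ?_⟩
  set s := ∑ j, pd u j x ^ 2 + δ with hs
  have hs0 : 0 < s := sum_sq_pos u hδ x
  set H := hessNormHS u x
  set G := ‖gradient u x‖
  have hH : 0 ≤ H := hess_nonneg u x
  have hG : 0 ≤ G := norm_nonneg _
  have hGs : G ^ 2 ≤ s := by rw [hs, sum_sq_pd]; linarith
  have hw : wt M u δ x = psi M s := rfl
  have hw0 : 0 ≤ psi M s := div_nonneg (hM.1.2.2.2.1 _ (Real.sqrt_nonneg _)) hs0.le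
  have hψs := hψ s hs0
  have b1 : ∀ i, |pd (wt M u δ) i x * pd u i x| ≤ 2 * n * c * psi M s * H := by
    intro i
    rw [pd_wt hM hu hδ, abs_mul, abs_mul]
    have h1 : |∑ j, 2 * pd u j x * pd (pd u j) i x| ≤ n * (2 * G * H) := by
      refine (Finset.abs_sum_le_sum_abs _ _).trans ?_
      have : ∀ j ∈ Finset.univ, |2 * pd u j x * pd (pd u j) i x| ≤ 2 * G * H := by
        intro j _
        rw [abs_mul, abs_mul, abs_of_pos (two_pos : (0:ℝ) < 2)]
        have := abs_pd_le u x j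
        have := abs_pd_pd_le hu i j x
        gcongr
      simpa using Finset.sum_le_card_nsmul _ _ _ this
    calc |deriv (psi M) s| * |∑ j, 2 * pd u j x * pd (pd u j) i x| * |pd u i x|
        ≤ |deriv (psi M) s| * (n * (2 * G * H)) * G := by
          have := abs_pd_le u x i
          gcongr
      _ = (|deriv (psi M) s| * G ^ 2) * (2 * n * H) := by ring
      _ ≤ (|deriv (psi M) s| * s) * (2 * n * H) := by gcongr
      _ ≤ (c * psi M s) * (2 * n * H) := by gcongr
      _ = _ := by ring
  have b2 : ∀ i, |wt M u δ x * pd (pd u i) i x| ≤ psi M s * H := by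
    intro i
    rw [abs_mul, hw, abs_of_nonneg hw0]
    exact mul_le_mul_of_nonneg_left (abs_pd_pd_le hu i i x) hw0
  calc |∑ i, (pd (wt M u δ) i x * pd u i x + wt M u δ x * pd (pd u i) i x)|
      ≤ ∑ i : Fin n, (2 * n * c * psi M s * H + psi M s * H) := by
        refine (Finset.abs_sum_le_sum_abs _ _).trans (Finset.sum_le_sum fun i _ => ?_)
        exact (abs_add_le _ _).trans (add_le_add (b1 i) (b2 i))
    _ = (2 * n ^ 2 * c + n) * psi M s * H := by simp; ring
    _ ≤ _ := by
        rw [hw]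
        nlinarith [mul_nonneg hw0 hH]
end

/-! ### The estimate with regularised weight -/

section
variable {n : ℕ} {Ω S : Set (E n)} {φ : E n → ℝ}

lemma integrable_continuous (hφ : LocLipschitzOn Ω φ) (hS : IsCompact S) (hSΩ : S ⊆ Ω)
    {f : E n → ℝ} (hf : Continuous f) (hf0 : ∀ x ∉ S, f x = 0) : Integrable f (measOf Ω φ) := by
  obtain ⟨C, hC⟩ := hS.exists_bound_of_continuousOn hf.continuousOn
  refine integrable_of_bdd hφ hS hSΩ hf.measurable.aestronglyMeasurable hf0 (C := max C 0)
    (Eventually.of_forall fun x => ?_)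
  by_cases hx : x ∈ S
  · exact (hC x hx).trans (le_max_left _ _)
  · simp [hf0 x hx]

lemma integrable_comp_mono (hφ : LocLipschitzOn Ω φ) (hS : IsCompact S) (hSΩ : S ⊆ Ω)
    {P : ℝ → ℝ} (hPm : Measurable P) (hnn : ∀ x ≥ (0:ℝ), 0 ≤ P x) (hmono : MonotoneOn P (Ici 0))
    (h0 : P 0 = 0) {g : E n → ℝ} (hg : AEMeasurable g (measOf Ω φ)) (hg0 : ∀ x, 0 ≤ g x)
    (hgS : ∀ x ∉ S, g x = 0) {T : ℝ} (hT : ∀ᵐ x ∂(measOf Ω φ), g x ≤ T) :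
    Integrable (fun x => P (g x)) (measOf Ω φ) := by
  refine integrable_of_bdd hφ hS hSΩ (hPm.comp_aemeasurable hg).aestronglyMeasurable
    (fun x hx => by simp [hgS x hx, h0]) (C := P T) ?_
  filter_upwards [hT] with x hx
  rw [abs_of_nonneg (hnn _ (hg0 x))]
  exact hmono (hg0 x) ((hg0 x).trans hx) hx

lemma integrable_comp_mono_continuous (hφ : LocLipschitzOn Ω φ) (hS : IsCompact S) (hSΩ : S ⊆ Ω)
    {P : ℝ → ℝ} (hPm : Measurable P) (hnn : ∀ x ≥ (0:ℝ), 0 ≤ P x) (hmono : MonotoneOn P (Ici 0))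
    (h0 : P 0 = 0) {g : E n → ℝ} (hg : Continuous g) (hg0 : ∀ x, 0 ≤ g x)
    (hgS : ∀ x ∉ S, g x = 0) : Integrable (fun x => P (g x)) (measOf Ω φ) := by
  obtain ⟨C, hC⟩ := hS.exists_bound_of_continuousOn hg.continuousOn
  refine integrable_comp_mono hφ hS hSΩ hPm hnn hmono h0 hg.aemeasurable hg0 hgS (T := max C 0)
    (Eventually.of_forall fun x => ?_)
  by_cases hx : x ∈ S
  · exact (le_abs_self _).trans ((hC x hx).trans (le_max_left _ _))
  · simp [hgS x hx]

/-- The Hardy-type inequality applied to the test function `a ∂ᵢu`. -/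
lemma hardy_sum (hφ : LocLipschitzOn Ω φ) {φ' : E n → E n} {P : ℝ → ℝ} (hPm : Measurable P)
    (hnn : ∀ x ≥ (0:ℝ), 0 ≤ P x) (hmono : MonotoneOn P (Ici 0)) (h0 : P 0 = 0)
    {K A : ℝ} (hK : 0 < K) (hA : 0 < A)
    (hH : ∀ u : E n → ℝ, TestFun Ω u →
      ∫ x, P (‖φ' x‖ * |u x|) ∂(measOf Ω φ) ≤
        K * ∫ x, P (A * ‖gradient u x‖) ∂(measOf Ω φ))
    {u : E n → ℝ} (hu : TestFun Ω u) {a : ℝ} (ha : 0 ≤ a) (i : Fin n) :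
    ∫ x, P (‖φ' x‖ * |a * pd u i x|) ∂(measOf Ω φ) ≤
      K * ∫ x, P (A * a * hessNormHS u x) ∂(measOf Ω φ) := by
  have hS : IsCompact (tsupport u) := hu.2.1
  refine (hH _ ((hu.pderiv i).const_mul a)).trans (mul_le_mul_of_nonneg_left ?_ hK.le)
  have hle : ∀ x, ‖gradient (fun x => a * pd u i x) x‖ ≤ a * hessNormHS u x := by
    intro x
    rw [gradient_const_mul (hu.pderiv i), abs_of_nonneg ha]
    exact mul_le_mul_of_nonneg_left (norm_gradient_pd_le hu i x) ha
  refine integral_mono ?_ ?_ fun x => hmono ?_ ?_ ?_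
  · refine integrable_comp_mono_continuous hφ hS hu.2.2 hPm hnn hmono h0
      (((hu.pderiv i).const_mul a).continuous_gradient.norm.const_mul A)
      (fun x => by positivity) fun x hx => ?_
    have := hle x
    rw [hess_eq_zero hu hx, mul_zero] at this
    rw [le_antisymm this (norm_nonneg _), mul_zero]
  · refine integrable_comp_mono_continuous hφ hS hu.2.2 hPm hnn hmono h0
      (hu.continuous_hess.const_mul _) (fun x => ?_) fun x hx => ?_
    · have := hess_nonneg u x
      positivity
    · rw [hess_eq_zero hu hx, mul_zero]
  · exact mul_nonneg hA.le (norm_nonneg _)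
  · exact mul_nonneg (by positivity) (hess_nonneg u x)
  · rw [mul_assoc]
    exact mul_le_mul_of_nonneg_left (hle x) hA.le

/-- Integration by parts for the field `u M(r)/r² ∇u`, whose divergence contains the term
`M(r)/r² |∇u|²` that is to be estimated. -/
lemma ibp_estimate (hΩ : IsOpen Ω) (hφ : LocLipschitzOn Ω φ) {φ' : E n → E n}
    (hφ' : ∀ᵐ x ∂(volume.restrict Ω), HasGradientAt φ (φ' x) x)
    {M : ℝ → ℝ} (hM : CondM M) {u : E n → ℝ} (hu : TestFun Ω u) {δ : ℝ} (hδ : 0 < δ) :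
    Integrable (fun x => (∑ i, u x * wt M u δ x * pd u i x * inner ℝ (φ' x)
        (EuclideanSpace.single i (1:ℝ))) -
        u x * ∑ i, (pd (wt M u δ) i x * pd u i x + wt M u δ x * pd (pd u i) i x))
      (measOf Ω φ) ∧
    ∫ x, wt M u δ x * ‖gradient u x‖ ^ 2 ∂(measOf Ω φ) =
      ∫ x, ((∑ i, u x * wt M u δ x * pd u i x * inner ℝ (φ' x)
        (EuclideanSpace.single i (1:ℝ))) -
        u x * ∑ i, (pd (wt M u δ) i x * pd u i x + wt M u δ x * pd (pd u i) i x))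
      ∂(measOf Ω φ) := by
  have hS : IsCompact (tsupport u) := hu.2.1
  have hSΩ := hu.2.2
  have hwt := contDiff_wt hM hu hδ
  have hu1 : ContDiff ℝ 1 u := hu.1.of_le (by simp)
  have hp1 : ∀ i, ContDiff ℝ 1 (pd u i) := fun i => (hu.pderiv i).1.of_le (by simp)
  have hcpd : ∀ {f : E n → ℝ} (_ : ContDiff ℝ 1 f) (i : Fin n), Continuous (pd f i) :=
    fun hf i => (hf.continuous_fderiv one_ne_zero).clm_apply continuous_const
  have hz : ∀ x ∉ tsupport u, u x = 0 := fun x hx => image_eq_zero_of_notMem_tsupport hx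
  set w : Fin n → E n → ℝ := fun i x => u x * wt M u δ x * pd u i x with hw
  have hw1 : ∀ i, ContDiff ℝ 1 (w i) := fun i => (hu1.mul hwt).mul (hp1 i)
  have hwS : ∀ i, tsupport (w i) ⊆ tsupport u := fun i =>
    (tsupport_mul_subset_left (f := fun x => u x * wt M u δ x)).trans
      (tsupport_mul_subset_left (f := u))
  have hwc : ∀ i, HasCompactSupport (w i) := fun i =>
    hS.of_isClosed_subset (isClosed_tsupport _) (hwS i)
  have hibp : ∀ i, ∫ x, pd (w i) i x ∂(measOf Ω φ) =
      ∫ x, w i x * inner ℝ (φ' x) (EuclideanSpace.single i (1:ℝ)) ∂(measOf Ω φ) := fun i =>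
    integral_fderiv_measOf hΩ hφ hφ' (hw1 i) (hwc i) ((hwS i).trans hSΩ) _
  have hpdw : ∀ i x, pd (w i) i x = wt M u δ x * pd u i x ^ 2 +
      u x * (pd (wt M u δ) i x * pd u i x + wt M u δ x * pd (pd u i) i x) := by
    intro i x
    have d1 := (hu1.differentiable one_ne_zero).differentiableAt (x := x)
    have d2 := (hwt.differentiable one_ne_zero).differentiableAt (x := x)
    have d3 := ((hp1 i).differentiable one_ne_zero).differentiableAt (x := x)
    have h : HasFDerivAt (w i) _ x := (d1.hasFDerivAt.mul d2.hasFDerivAt).mul d3.hasFDerivAt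
    rw [pd, h.fderiv]
    simp [pd]
    ring
  have hI1 : ∀ i, Integrable (fun x => pd (w i) i x) (measOf Ω φ) := fun i =>
    integrable_continuous hφ hS hSΩ (hcpd (hw1 i) i) fun x hx =>
      pd_eq_zero (fun h => hx (hwS i h)) i
  have hI2 : ∀ i, Integrable (fun x => w i x * inner ℝ (φ' x) (EuclideanSpace.single i (1:ℝ)))
      (measOf Ω φ) := by
    intro i
    obtain ⟨L, hL0, hL⟩ := gradient_bound hφ hS hSΩ hφ'
    obtain ⟨C, hC⟩ := (hwc i).exists_bound_of_continuous (hw1 i).continuous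
    have hm : AEMeasurable (fun x => inner ℝ (φ' x) (EuclideanSpace.single i (1:ℝ)))
        (measOf Ω φ) :=
      (gradient_aemeasurable hφ').inner_const
    refine integrable_of_bdd hφ hS hSΩ
      ((hw1 i).continuous.measurable.aemeasurable.mul hm).aestronglyMeasurable
      (fun x hx => by simp [hw, hz x hx]) (C := C * L) ?_
    filter_upwards [hL] with x hx
    have hC0 : 0 ≤ C := (norm_nonneg _).trans (hC x)
    by_cases hux : u x = 0
    · simp only [hw, hux, zero_mul, abs_zero]; positivity
    · have hint : x ∈ interior (tsupport u) :=
        interior_mono (subset_tsupport u)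
          (by rw [hu.1.continuous.isOpen_support.interior_eq]; exact hux)
      rw [abs_mul]
      refine mul_le_mul (hC x) ?_ (abs_nonneg _) hC0
      refine (abs_real_inner_le_norm _ _).trans ?_
      simpa using hx hint
  have hI3 : Integrable (fun x => u x * ∑ i, (pd (wt M u δ) i x * pd u i x +
      wt M u δ x * pd (pd u i) i x)) (measOf Ω φ) := by
    refine integrable_continuous hφ hS hSΩ (hu.1.continuous.mul
      (continuous_finsetSum _ fun i _ => ?_)) fun x hx => by simp [hz x hx]
    exact ((hcpd hwt i).mul (hp1 i).continuous).add (hwt.continuous.mul (hcpd (hp1 i) i))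
  have hI2s := integrable_finsetSum (s := Finset.univ) fun i _ => hI2 i
  refine ⟨hI2s.sub hI3, ?_⟩
  rw [integral_sub hI2s hI3, integral_finsetSum _ fun i _ => hI2 i]
  simp only [← hibp]
  rw [← integral_finsetSum _ fun i _ => hI1 i,
    ← integral_sub (integrable_finsetSum _ fun i _ => hI1 i) hI3]
  congr 1
  ext x
  simp only [hpdw, Finset.sum_add_distrib, ← Finset.mul_sum, sum_sq_pd]
  ring

/-- The final estimate at a fixed regularisation parameter: after Young's inequality and the
Hardy inequality, only half of the integral of `M(r)` remains on the right. -/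
lemma reg_estimate (hΩ : IsOpen Ω) (hφ : LocLipschitzOn Ω φ) {φ' : E n → E n}
    (hφ' : ∀ᵐ x ∂(volume.restrict Ω), HasGradientAt φ (φ' x) x)
    {M P Q : ℝ → ℝ} (hM : CondM M) (hY : CondY M P Q) {K A : ℝ} (hK : 0 < K) (hA : 0 < A)
    (hH : ∀ u : E n → ℝ, TestFun Ω u →
      ∫ x, P (‖φ' x‖ * |u x|) ∂(measOf Ω φ) ≤
        K * ∫ x, P (A * ‖gradient u x‖) ∂(measOf Ω φ))
    {C : ℝ} (hC : 0 < C)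
    (hdiv : ∀ u : E n → ℝ, TestFun Ω u → ∀ δ > (0:ℝ), ∀ x,
      |∑ i, (pd (wt M u δ) i x * pd u i x + wt M u δ x * pd (pd u i) i x)| ≤
        C * wt M u δ x * hessNormHS u x)
    {u : E n → ℝ} (hu : TestFun Ω u) {τ : ℝ} (hτ : 0 < τ) {δ : ℝ} (hδ : 0 < δ) :
    ∫ x, wt M u δ x * ‖gradient u x‖ ^ 2 ∂(measOf Ω φ) ≤
      1 / 2 * (∫ x in tsupport u, M (Real.sqrt (∑ j, pd u j x ^ 2 + δ)) ∂(measOf Ω φ) +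
        (∫ x, P (2 * τ * C * hessNormHS u x) ∂(measOf Ω φ) +
          n * (K * ∫ x, P (A * (2 * τ * n) * hessNormHS u x) ∂(measOf Ω φ)) +
        ∫ x, Q (2 / τ * |u x|) ∂(measOf Ω φ))) := by
  have hS : IsCompact (tsupport u) := hu.2.1
  have hSΩ := hu.2.2
  obtain ⟨hPm, hQm, hPnn, hQnn, hPmono, hQmono, hP0, hQ0, -⟩ := id hY
  have hMnn := hM.1.2.2.2.1
  have hz : ∀ x ∉ tsupport u, u x = 0 := fun x hx => image_eq_zero_of_notMem_tsupport hx
  obtain ⟨hI, heq⟩ := ibp_estimate hΩ hφ hφ' hM hu hδ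
  have hcs : Continuous fun x => ∑ j, pd u j x ^ 2 + δ :=
    (continuous_finsetSum _ fun j _ => ((hu.pderiv j).1.continuous).pow 2).add continuous_const
  have hcM : Continuous fun x => M (Real.sqrt (∑ j, pd u j x ^ 2 + δ)) :=
    hM.1.1.comp_continuous (Real.continuous_sqrt.comp hcs) fun x => Real.sqrt_nonneg _
  have hIM : Integrable ((tsupport u).indicator fun x => M (Real.sqrt (∑ j, pd u j x ^ 2 + δ)))
      (measOf Ω φ) := by
    obtain ⟨B, hB⟩ := hS.exists_bound_of_continuousOn hcM.continuousOn
    refine integrable_of_bdd hφ hS hSΩ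
      (hcM.measurable.indicator hS.measurableSet).aestronglyMeasurable
      (fun x hx => indicator_of_notMem hx _) (C := max B 0) (Eventually.of_forall fun x => ?_)
    by_cases hx : x ∈ tsupport u
    · rw [indicator_of_mem hx]; exact (hB x hx).trans (le_max_left _ _)
    · rw [indicator_of_notMem hx]; simp
  have hIP : Integrable (fun x => P (2 * τ * C * hessNormHS u x)) (measOf Ω φ) := by
    refine integrable_comp_mono_continuous hφ hS hSΩ hPm hPnn hPmono hP0
      (hu.continuous_hess.const_mul _) (fun x => ?_) fun x hx => ?_
    · have := hess_nonneg u x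
      positivity
    · rw [hess_eq_zero hu hx, mul_zero]
  have hIQ : Integrable (fun x => Q (2 / τ * |u x|)) (measOf Ω φ) := by
    refine integrable_comp_mono_continuous hφ hS hSΩ hQm hQnn hQmono hQ0
      (hu.1.continuous.abs.const_mul _) (fun x => by positivity) fun x hx => ?_
    rw [hz x hx, abs_zero, mul_zero]
  have hIφ : ∀ i, Integrable (fun x => P (‖φ' x‖ * |2 * τ * n * pd u i x|)) (measOf Ω φ) := by
    intro i
    obtain ⟨L, hL0, hL⟩ := gradient_bound hφ hS hSΩ hφ'
    have ht := (hu.pderiv i).const_mul (2 * τ * n)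
    obtain ⟨B, hB⟩ := ht.2.1.exists_bound_of_continuous ht.1.continuous
    refine integrable_comp_mono hφ hS hSΩ hPm hPnn hPmono hP0
      ((gradient_aemeasurable hφ').norm.mul ht.1.continuous.abs.measurable.aemeasurable)
      (fun x => by positivity) (fun x hx => by simp [pd_eq_zero hx]) (T := L * B) ?_
    filter_upwards [hL] with x hx
    have hB0 : 0 ≤ B := (norm_nonneg _).trans (hB x)
    by_cases hux : pd u i x = 0
    · simp only [hux, mul_zero, abs_zero]; positivity
    · have hint : x ∈ interior (tsupport u) := by
        refine interior_mono ((subset_tsupport _).trans (pd_tsupport u i)) ?_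
        rw [(hu.pderiv i).1.continuous.isOpen_support.interior_eq]
        exact hux
      exact mul_le_mul (hx hint) (hB x) (abs_nonneg _) hL0
  have hIφs := integrable_finsetSum (s := Finset.univ) fun i _ => hIφ i
  rw [heq]
  have hpt : ∀ x, (∑ i, u x * wt M u δ x * pd u i x * inner ℝ (φ' x)
        (EuclideanSpace.single i (1:ℝ))) -
        u x * ∑ i, (pd (wt M u δ) i x * pd u i x + wt M u δ x * pd (pd u i) i x) ≤
      1 / 2 * ((tsupport u).indicator (fun x => M (Real.sqrt (∑ j, pd u j x ^ 2 + δ))) x +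
        (P (2 * τ * C * hessNormHS u x) + ∑ i, P (‖φ' x‖ * |2 * τ * n * pd u i x|) +
          Q (2 / τ * |u x|))) := by
    intro x
    by_cases hx : x ∈ tsupport u
    · rw [indicator_of_mem hx]
      set s := ∑ j, pd u j x ^ 2 + δ with hs
      have hs0 : 0 < s := sum_sq_pos u hδ x
      have hw : wt M u δ x = M (Real.sqrt s) / Real.sqrt s ^ 2 := by
        rw [Real.sq_sqrt hs0.le]; rfl
      have hw0 : 0 ≤ wt M u δ x := by
        rw [hw]; exact div_nonneg (hMnn _ (Real.sqrt_nonneg _)) (sq_nonneg _)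
      set H := hessNormHS u x with hHdef
      have hH0 : 0 ≤ H := hess_nonneg u x
      have h1 : ∑ i, u x * wt M u δ x * pd u i x * inner ℝ (φ' x)
          (EuclideanSpace.single i (1:ℝ)) ≤ wt M u δ x * (∑ i, ‖φ' x‖ * |pd u i x|) * |u x| := by
        rw [Finset.mul_sum, Finset.sum_mul]
        refine Finset.sum_le_sum fun i _ => ?_
        refine (le_abs_self _).trans ?_
        rw [abs_mul, abs_mul, abs_mul, abs_of_nonneg hw0]
        have : |inner ℝ (φ' x) (EuclideanSpace.single i (1:ℝ))| ≤ ‖φ' x‖ := by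
          refine (abs_real_inner_le_norm _ _).trans ?_
          simp
        calc _ ≤ |u x| * wt M u δ x * |pd u i x| * ‖φ' x‖ := by gcongr
          _ = _ := by ring
      have h2 : -(u x * ∑ i, (pd (wt M u δ) i x * pd u i x + wt M u δ x * pd (pd u i) i x)) ≤
          wt M u δ x * (C * H) * |u x| := by
        refine (neg_le_abs _).trans ?_
        rw [abs_mul]
        calc _ ≤ |u x| * (C * wt M u δ x * H) :=
              mul_le_mul_of_nonneg_left (hdiv u hu δ hδ x) (abs_nonneg _)
          _ = _ := by ring
      have hV0 : 0 ≤ ∑ i, ‖φ' x‖ * |pd u i x| := Finset.sum_nonneg fun i _ => by positivity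
      have hy := hY.young hMnn hτ (Real.sqrt_pos.2 hs0)
        (v := C * H + ∑ i, ‖φ' x‖ * |pd u i x|) (w := |u x|) (by positivity) (abs_nonneg _)
      rw [← hw] at hy
      have h3 : P (τ * (C * H + ∑ i, ‖φ' x‖ * |pd u i x|)) ≤
          P (2 * τ * C * H) + ∑ i, P (‖φ' x‖ * |2 * τ * n * pd u i x|) := by
        have e1 := monotone_add_le hPmono hPnn (τ * (C * H)) (τ * ∑ i, ‖φ' x‖ * |pd u i x|)
          (by positivity) (by positivity)
        have e2 := monotone_sum_le hPmono hPnn hP0 (fun i => 2 * τ * (‖φ' x‖ * |pd u i x|))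
          (fun i => by positivity)
        rw [← Finset.mul_sum] at e2
        have e3 : ∀ i, ‖φ' x‖ * |2 * τ * n * pd u i x| =
            n * (2 * τ * (‖φ' x‖ * |pd u i x|)) := by
          intro i
          rw [abs_mul, abs_of_nonneg (by positivity : (0:ℝ) ≤ 2 * τ * n)]
          ring
        simp only [e3]
        rw [← mul_add, ← mul_assoc 2 τ, ← mul_assoc 2 τ, ← mul_assoc (2 * τ) C] at e1
        linarith
      have h4 : wt M u δ x * (C * H + ∑ i, ‖φ' x‖ * |pd u i x|) * |u x| =
        wt M u δ x * (C * H) * |u x| + wt M u δ x * (∑ i, ‖φ' x‖ * |pd u i x|) * |u x| := by ring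
      linarith
    · rw [indicator_of_notMem hx, hz x hx, hess_eq_zero hu hx]
      simp [pd_eq_zero hx, hP0, hQ0]
  have hA1 : Integrable (fun x => P (2 * τ * C * hessNormHS u x) +
      ∑ i, P (‖φ' x‖ * |2 * τ * n * pd u i x|)) (measOf Ω φ) := hIP.add hIφs
  have hA2 : Integrable (fun x => P (2 * τ * C * hessNormHS u x) +
      ∑ i, P (‖φ' x‖ * |2 * τ * n * pd u i x|) + Q (2 / τ * |u x|)) (measOf Ω φ) := hA1.add hIQ
  refine (integral_mono hI ((hIM.add hA2).const_mul _) hpt).trans ?_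
  rw [integral_const_mul]
  refine mul_le_mul_of_nonneg_left ?_ (by norm_num)
  simp only [Pi.add_apply]
  rw [integral_add hIM hA2, integral_indicator hS.measurableSet, integral_add hA1 hIQ,
    integral_add hIP hIφs]
  refine add_le_add le_rfl (add_le_add (add_le_add le_rfl ?_) le_rfl)
  rw [integral_finsetSum _ fun i _ => hIφ i]
  have := Finset.sum_le_card_nsmul Finset.univ _ _ fun i _ =>
    hardy_sum hφ hPm hPnn hPmono hP0 hK hA hH hu (a := 2 * τ * n) (by positivity) i
  simpa using this
end

/-! ### Removing the regularisation -/

section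
variable {n : ℕ} {Ω : Set (E n)} {φ : E n → ℝ}

/-- The inequality with a free scale `τ`, before the Δ₂-condition is used. -/
lemma scaled_estimate (hΩ : IsOpen Ω) (hφ : LocLipschitzOn Ω φ) {φ' : E n → E n}
    (hφ' : ∀ᵐ x ∂(volume.restrict Ω), HasGradientAt φ (φ' x) x)
    {M P Q : ℝ → ℝ} (hM : CondM M) (hY : CondY M P Q) {K A : ℝ} (hK : 0 < K) (hA : 0 < A)
    (hH : ∀ u : E n → ℝ, TestFun Ω u →
      ∫ x, P (‖φ' x‖ * |u x|) ∂(measOf Ω φ) ≤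
        K * ∫ x, P (A * ‖gradient u x‖) ∂(measOf Ω φ))
    {C : ℝ} (hC : 0 < C)
    (hdiv : ∀ u : E n → ℝ, TestFun Ω u → ∀ δ > (0:ℝ), ∀ x,
      |∑ i, (pd (wt M u δ) i x * pd u i x + wt M u δ x * pd (pd u i) i x)| ≤
        C * wt M u δ x * hessNormHS u x)
    {u : E n → ℝ} (hu : TestFun Ω u) {τ : ℝ} (hτ : 0 < τ) :
    ∫ x, M ‖gradient u x‖ ∂(measOf Ω φ) ≤
      ∫ x, P (2 * τ * C * hessNormHS u x) ∂(measOf Ω φ) +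
        n * (K * ∫ x, P (A * (2 * τ * n) * hessNormHS u x) ∂(measOf Ω φ)) +
      ∫ x, Q (2 / τ * |u x|) ∂(measOf Ω φ) := by
  have hS : IsCompact (tsupport u) := hu.2.1
  have hSΩ := hu.2.2
  have hM0 := hM.1.2.2.1
  have hMnn := hM.1.2.2.2.1
  set δ : ℕ → ℝ := fun k => 1 / ((k : ℝ) + 1) with hδdef
  have hδ : ∀ k, 0 < δ k := fun k => by positivity
  have hδ1 : ∀ k, δ k ≤ 1 := fun k => by
    rw [hδdef, div_le_one (by positivity)]
    have : (0:ℝ) ≤ k := k.cast_nonneg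
    linarith
  have hδlim : Tendsto δ atTop (nhds 0) := tendsto_one_div_add_atTop_nhds_zero_nat
  have hr : ∀ k x, Real.sqrt (∑ j, pd u j x ^ 2 + δ k) ≤ ‖gradient u x‖ + 1 := fun k x => by
    rw [sum_sq_pd]
    refine Real.sqrt_le_iff.2 ⟨by positivity, ?_⟩
    nlinarith [norm_nonneg (gradient u x), hδ1 k]
  have hslim : ∀ x, Tendsto (fun k => ∑ j, pd u j x ^ 2 + δ k) atTop
      (nhds (‖gradient u x‖ ^ 2)) := fun x => by
    simpa only [sum_sq_pd, add_zero] using hδlim.const_add (‖gradient u x‖ ^ 2)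
  have hMlim : ∀ x, Tendsto (fun k => M (Real.sqrt (∑ j, pd u j x ^ 2 + δ k))) atTop
      (nhds (M ‖gradient u x‖)) := fun x => by
    have h1 : Tendsto (fun k => Real.sqrt (∑ j, pd u j x ^ 2 + δ k)) atTop
        (nhdsWithin ‖gradient u x‖ (Ici 0)) := by
      refine tendsto_nhdsWithin_iff.2 ⟨?_, Eventually.of_forall fun k => Real.sqrt_nonneg _⟩
      simpa [Real.sqrt_sq (norm_nonneg _)] using (hslim x).sqrt
    exact (hM.1.1 _ (norm_nonneg (gradient u x))).tendsto.comp h1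
  -- A common bound for `M(r)` on the support of `u`, valid for every `δ ≤ 1`.
  obtain ⟨R, hR⟩ := hS.exists_bound_of_continuousOn hu.continuous_gradient.continuousOn
  obtain ⟨B, hB⟩ := isCompact_Icc.exists_bound_of_continuousOn
    (hM.1.1.mono (Icc_subset_Ici_self : Icc 0 (R + 1) ⊆ Ici 0))
  have hMB : ∀ k, ∀ x ∈ tsupport u, M (Real.sqrt (∑ j, pd u j x ^ 2 + δ k)) ≤ B := fun k x hx =>
    (le_abs_self _).trans (hB _ ⟨Real.sqrt_nonneg _, (hr k x).trans (by linarith [hR x hx])⟩)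
  have hBint : IntegrableOn (fun _ : E n => B) (tsupport u) (measOf Ω φ) :=
    integrableOn_const (measOf_compact_lt_top hφ hS hSΩ).ne
  have hMr : Tendsto (fun k => ∫ x in tsupport u, M (Real.sqrt (∑ j, pd u j x ^ 2 + δ k))
      ∂(measOf Ω φ)) atTop (nhds (∫ x, M ‖gradient u x‖ ∂(measOf Ω φ))) := by
    rw [← setIntegral_eq_integral_of_forall_compl_eq_zero (s := tsupport u)
      (f := fun x => M ‖gradient u x‖) fun x hx => by rw [gradient_eq_zero hx, norm_zero, hM0]]
    refine tendsto_integral_of_dominated_convergence (fun _ => B) (fun k => ?_) hBint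
      (fun k => ?_) (Eventually.of_forall hMlim)
    · have hcs : Continuous fun x => ∑ j, pd u j x ^ 2 + δ k :=
        (continuous_finsetSum _ fun j _ => ((hu.pderiv j).1.continuous).pow 2).add
          continuous_const
      exact (hM.1.1.comp_continuous (Real.continuous_sqrt.comp hcs)
        fun x => Real.sqrt_nonneg _).measurable.aestronglyMeasurable
    · refine (ae_restrict_iff' hS.measurableSet).2 (Eventually.of_forall fun x hx => ?_)
      rw [Real.norm_eq_abs, abs_of_nonneg (hMnn _ (Real.sqrt_nonneg _))]
      exact hMB k x hx
  have hL : Tendsto (fun k => ∫ x, wt M u (δ k) x * ‖gradient u x‖ ^ 2 ∂(measOf Ω φ)) atTop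
      (nhds (∫ x, M ‖gradient u x‖ ∂(measOf Ω φ))) := by
    refine tendsto_integral_of_dominated_convergence ((tsupport u).indicator fun _ => B)
      (fun k => ?_) ((integrable_indicator_iff hS.measurableSet).2 hBint)
      (fun k => Eventually.of_forall fun x => ?_) (Eventually.of_forall fun x => ?_)
    · exact ((contDiff_wt hM hu (hδ k)).continuous.mul
        (hu.continuous_gradient.norm.pow 2)).measurable.aestronglyMeasurable
    · by_cases hx : x ∈ tsupport u
      · rw [indicator_of_mem hx]
        have hs0 := sum_sq_pos u (hδ k) x
        have hnn := hMnn _ (Real.sqrt_nonneg (∑ j, pd u j x ^ 2 + δ k))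
        have hle : ‖gradient u x‖ ^ 2 ≤ ∑ j, pd u j x ^ 2 + δ k := by
          rw [sum_sq_pd]; linarith [hδ k]
        have hw0 : 0 ≤ wt M u (δ k) x := div_nonneg hnn hs0.le
        rw [Real.norm_eq_abs, abs_of_nonneg (by positivity)]
        calc _ ≤ wt M u (δ k) x * (∑ j, pd u j x ^ 2 + δ k) := by gcongr
          _ = M (Real.sqrt (∑ j, pd u j x ^ 2 + δ k)) := div_mul_cancel₀ _ hs0.ne'
          _ ≤ B := hMB k x hx
      · rw [indicator_of_notMem hx, gradient_eq_zero hx]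
        simp
    · by_cases hG : ‖gradient u x‖ = 0
      · simp [hG, hM0]
      · have h := ((hMlim x).div (hslim x) (pow_ne_zero 2 hG)).mul_const (‖gradient u x‖ ^ 2)
        rwa [div_mul_cancel₀ _ (pow_ne_zero 2 hG)] at h
  have hfin := le_of_tendsto_of_tendsto' hL ((hMr.add_const _).const_mul (1 / 2)) fun k =>
    reg_estimate hΩ hφ hφ' hM hY hK hA hH hC hdiv hu hτ (hδ k)
  linarith

/-- The two `P`-integrals of `scaled_estimate` merged into one, by monotonicity of `P`. -/
lemma scaled_estimate' (hΩ : IsOpen Ω) (hφ : LocLipschitzOn Ω φ) {φ' : E n → E n}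
    (hφ' : ∀ᵐ x ∂(volume.restrict Ω), HasGradientAt φ (φ' x) x)
    {M P Q : ℝ → ℝ} (hM : CondM M) (hY : CondY M P Q) {K A : ℝ} (hK : 0 < K) (hA : 0 < A)
    (hH : ∀ u : E n → ℝ, TestFun Ω u →
      ∫ x, P (‖φ' x‖ * |u x|) ∂(measOf Ω φ) ≤
        K * ∫ x, P (A * ‖gradient u x‖) ∂(measOf Ω φ)) :
    ∃ B > (0:ℝ), ∀ u : E n → ℝ, TestFun Ω u → ∀ τ > (0:ℝ),
      ∫ x, M ‖gradient u x‖ ∂(measOf Ω φ) ≤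
        (1 + n * K) * ∫ x, P (τ * B * hessNormHS u x) ∂(measOf Ω φ) +
          ∫ x, Q (2 / τ * |u x|) ∂(measOf Ω φ) := by
  obtain ⟨C, hC, hdiv⟩ := hM.div_bound n
  refine ⟨max (2 * C) (2 * n * A), lt_max_of_lt_left (by positivity), fun u hu τ hτ => ?_⟩
  have h := scaled_estimate hΩ hφ hφ' hM hY hK hA hH hC (fun u => hdiv Ω u) hu hτ
  obtain ⟨hPm, -, hPnn, -, hPmono, -, hP0, -⟩ := hY
  have hint : ∀ a : ℝ, 0 ≤ a → Integrable (fun x => P (a * hessNormHS u x)) (measOf Ω φ) :=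
    fun a ha => integrable_comp_mono_continuous hφ hu.2.1 hu.2.2 hPm hPnn hPmono hP0
      (hu.continuous_hess.const_mul _) (fun x => mul_nonneg ha (hess_nonneg u x))
      fun x hx => by rw [hess_eq_zero hu hx, mul_zero]
  have hmon : ∀ a b : ℝ, 0 ≤ a → a ≤ b → ∫ x, P (a * hessNormHS u x) ∂(measOf Ω φ) ≤
      ∫ x, P (b * hessNormHS u x) ∂(measOf Ω φ) := fun a b ha hab =>
    integral_mono (hint a ha) (hint b (ha.trans hab)) fun x =>
      hPmono (mul_nonneg ha (hess_nonneg u x)) (mul_nonneg (ha.trans hab) (hess_nonneg u x))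
        (mul_le_mul_of_nonneg_right hab (hess_nonneg u x))
  have h1 := hmon (2 * τ * C) (τ * max (2 * C) (2 * n * A)) (by positivity) (by
    calc 2 * τ * C = τ * (2 * C) := by ring
      _ ≤ _ := mul_le_mul_of_nonneg_left (le_max_left _ _) hτ.le)
  have h2 := hmon (A * (2 * τ * n)) (τ * max (2 * C) (2 * n * A)) (by positivity) (by
    calc A * (2 * τ * n) = τ * (2 * n * A) := by ring
      _ ≤ _ := mul_le_mul_of_nonneg_left (le_max_right _ _) hτ.le)
  have h3 := mul_le_mul_of_nonneg_left h2 (by positivity : (0:ℝ) ≤ n * K)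
  linarith
end

/-- Remark 3.2: if in addition `P` or `Q` satisfies the Δ₂-condition, then the
Gagliardo–Nirenberg inequality holds with both modulars evaluated at the bare arguments. -/
theorem statement2 {n : ℕ} (Ω : Set (E n)) (hΩ : IsOpen Ω)
    (M P Q : ℝ → ℝ) (hM : CondM M) (hY : CondY M P Q)
    (hΔ : Delta2 P ∨ Delta2 Q)
    (φ : E n → ℝ) (hφ : LocLipschitzOn Ω φ) (φ' : E n → E n)
    (hφ' : ∀ᵐ x ∂(volume.restrict Ω), HasGradientAt φ (φ' x) x)
    (K A : ℝ) (hK : 0 < K) (hA : 0 < A)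
    (hH : ∀ u : E n → ℝ, TestFun Ω u →
      ∫ x, P (‖φ' x‖ * |u x|) ∂(measOf Ω φ) ≤
        K * ∫ x, P (A * ‖gradient u x‖) ∂(measOf Ω φ)) :
    ∃ L₁ > (0:ℝ), ∃ L₂ > (0:ℝ), ∀ u : E n → ℝ, TestFun Ω u →
      ∫ x, M ‖gradient u x‖ ∂(measOf Ω φ) ≤
        L₁ * ∫ x, P (hessNormHS u x) ∂(measOf Ω φ)
          + L₂ * ∫ x, Q |u x| ∂(measOf Ω φ) := by
  obtain ⟨B, hB, h⟩ := scaled_estimate' hΩ hφ hφ' hM hY hK hA hH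
  obtain ⟨hPm, hQm, hPnn, hQnn, hPmono, hQmono, hP0, hQ0, -⟩ := hY
  have hL : (0:ℝ) < 1 + n * K := by positivity
  have hIP : ∀ (u : E n → ℝ), TestFun Ω u → ∀ a : ℝ, 0 ≤ a →
      Integrable (fun x => P (a * hessNormHS u x)) (measOf Ω φ) := fun u hu a ha =>
    integrable_comp_mono_continuous hφ hu.2.1 hu.2.2 hPm hPnn hPmono hP0
      (hu.continuous_hess.const_mul _) (fun x => mul_nonneg ha (hess_nonneg u x))
      fun x hx => by rw [hess_eq_zero hu hx, mul_zero]
  have hIQ : ∀ (u : E n → ℝ), TestFun Ω u → ∀ a : ℝ, 0 ≤ a →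
      Integrable (fun x => Q (a * |u x|)) (measOf Ω φ) := fun u hu a ha =>
    integrable_comp_mono_continuous hφ hu.2.1 hu.2.2 hQm hQnn hQmono hQ0
      (hu.1.continuous.abs.const_mul _) (fun x => mul_nonneg ha (abs_nonneg _))
      fun x hx => by rw [image_eq_zero_of_notMem_tsupport hx, abs_zero, mul_zero]
  rcases hΔ with hP | hQ
  · -- The scale `τ = 2` leaves the argument of `Q` bare.
    obtain ⟨c, hc, hPc⟩ := hP.dilate hPmono hP0 (2 * B) (by positivity)
    refine ⟨(1 + n * K) * c, by positivity, 1, one_pos, fun u hu => ?_⟩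
    have h1 := h u hu 2 two_pos
    have h2 : ∫ x, P (2 * B * hessNormHS u x) ∂(measOf Ω φ) ≤
        c * ∫ x, P (hessNormHS u x) ∂(measOf Ω φ) := by
      rw [← integral_const_mul]
      have hI := hIP u hu 1 zero_le_one
      simp only [one_mul] at hI
      exact integral_mono (hIP u hu _ (by positivity)) (hI.const_mul c)
        fun x => hPc _ (hess_nonneg u x)
    have h3 := mul_le_mul_of_nonneg_left h2 hL.le
    simp only [div_self (two_ne_zero : (2:ℝ) ≠ 0), one_mul] at h1
    linarith
  · -- The scale `τ = 1 / B` leaves the argument of `P` bare.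
    obtain ⟨c, hc, hQc⟩ := hQ.dilate hQmono hQ0 (2 / (1 / B)) (by positivity)
    refine ⟨1 + n * K, hL, c, hc, fun u hu => ?_⟩
    have h1 := h u hu (1 / B) (by positivity)
    have h2 : ∫ x, Q (2 / (1 / B) * |u x|) ∂(measOf Ω φ) ≤
        c * ∫ x, Q |u x| ∂(measOf Ω φ) := by
      rw [← integral_const_mul]
      have hI := hIQ u hu 1 zero_le_one
      simp only [one_mul] at hI
      exact integral_mono (hIQ u hu _ (by positivity)) (hI.const_mul c)
        fun x => hQc _ (abs_nonneg _)
    simp only [one_div_mul_cancel hB.ne', one_mul] at h1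
    linarith
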